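/- In a quasi-homogeneous network (θ_i = θ, L_i = L for all nodes, ξ_{ij} = ξ > 0 for all arcs), if the directed graph G contains no k-core with k = ⌈(L − θ)/ξ⌉ (i.e., every nonempty induced subgraph has a node of in-degree less than k within it), then the iterative construction S_1 ⊆ S_1 ∪ S_2 ⊆ … with S_1 = {i : L ≥ θ + ξ·|N⁻(i)|} and S_{m+1} = {i ∉ S̄_m : L ≥ θ + ξ·|N⁻(i) \ S̄_m| − ξ·|N⁺(i) ∩ S̄_m|} exhausts N, i.e., there exists ℓ with S̄_ℓ = N. -/

import Mathlib

open Finset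

/-- In-neighbors of `i`: players `j` with an arc `(j, i)`. -/
def inN {V : Type*} [Fintype V] (A : V → V → Prop) [DecidableRel A] (i : V) : Finset V :=
  Finset.univ.filter fun j => A j i

/-- Out-neighbors of `i`: players `j` with an arc `(i, j)`. -/
def outN {V : Type*} [Fintype V] (A : V → V → Prop) [DecidableRel A] (i : V) : Finset V :=
  Finset.univ.filter fun j => A i j

/-- One step of the iterative construction in a quasi-homogeneous network: to
the current set `B = S̄_m` of secured players, add all players `i ∉ B` with
`L ≥ θ + ξ·|N⁻(i) \ B| − ξ·|N⁺(i) ∩ B|`.  (On `B = ∅` this is exactly the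
condition defining `S_1`.) -/
noncomputable def qStep {V : Type*} [Fintype V] [DecidableEq V]
    (A : V → V → Prop) [DecidableRel A] (θ L ξ : ℝ) (B : Finset V) : Finset V :=
  B ∪ Finset.univ.filter (fun i => i ∉ B ∧
    θ + ξ * ((inN A i \ B).card : ℝ) - ξ * ((outN A i ∩ B).card : ℝ) ≤ L)

/-- Without a `⌈(L - θ) / ξ⌉₊`-core, a step from a proper subset of the players is strict. -/
theorem ssubset_qStep {V : Type*} [Fintype V] [DecidableEq V]
    (A : V → V → Prop) [DecidableRel A] {θ L ξ : ℝ} (hξ : 0 < ξ)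
    (hnocore : ∀ H : Finset V, H.Nonempty → ∃ i ∈ H, (inN A i ∩ H).card < ⌈(L - θ) / ξ⌉₊)
    {B : Finset V} (hB : B ≠ Finset.univ) : B ⊂ qStep A θ L ξ B := by
  obtain ⟨i, hi, hdeg⟩ := hnocore Bᶜ
    (by rwa [Finset.nonempty_iff_ne_empty, ne_eq, Finset.compl_eq_empty_iff])
  rw [Finset.mem_compl] at hi
  refine Finset.ssubset_iff_of_subset Finset.subset_union_left |>.mpr ⟨i, ?_, hi⟩
  rw [Nat.lt_ceil, lt_div_iff₀ hξ, ← Finset.sdiff_eq_inter_compl] at hdeg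
  have hout : 0 ≤ ξ * ((outN A i ∩ B).card : ℝ) := by positivity
  refine Finset.mem_union_right _ (Finset.mem_filter.mpr ⟨Finset.mem_univ i, hi, ?_⟩)
  linarith

/-- An operation that strictly enlarges every proper subset of a finite type reaches the
whole type after finitely many iterations. -/
theorem exists_iterate_eq_univ {V : Type*} [Fintype V] {f : Finset V → Finset V}
    (hf : ∀ B, B ≠ Finset.univ → B ⊂ f B) (B : Finset V) :
    ∃ n : ℕ, f^[n] B = Finset.univ := by
  induction B using WellFoundedGT.induction with
  | ind B ih =>
    by_cases hB : B = Finset.univ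
    · exact ⟨0, hB⟩
    · obtain ⟨n, hn⟩ := ih (f B) (hf B hB)
      exact ⟨n + 1, hn⟩

/-- in a quasi-homogeneous network (`θ_i = θ`, `L_i = L`,
`ξ_{ij} = ξ > 0`), if `G` contains no `k`-core with `k = ⌈(L−θ)/ξ⌉` — every
nonempty induced subgraph has a node of within-subgraph in-degree `< k` —
then the iterative construction `S̄_1 ⊆ S̄_2 ⊆ …` exhausts `N`:
`S̄_ℓ = N` for some `ℓ`. -/
theorem quasi_homogeneous_agreeable_exists {V : Type*} [Fintype V] [DecidableEq V]
    (A : V → V → Prop) [DecidableRel A] (θ L ξ : ℝ)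
    (hθ : 0 ≤ θ) (hL : 0 ≤ L) (hξ : 0 < ξ) (hLθ : θ ≤ L)
    (hnocore : ∀ H : Finset V, H.Nonempty →
      ∃ i ∈ H, ((inN A i ∩ H).card : ℕ) < ⌈(L - θ) / ξ⌉₊) :
    ∃ ℓ : ℕ, (qStep A θ L ξ)^[ℓ] ∅ = Finset.univ :=
  exists_iterate_eq_univ (fun _ hB => ssubset_qStep A hξ hnocore hB) ∅
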